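/- arXiv:1310.2108 — 4 statements merged into one kernel-verified Lean document; each statement's English description precedes it below -/
import Mathlib

section
/- Let α : ℝ × ℝ → ℝ³ be a smooth solution of the vortex filament equation α_t = α_s ×_L α_ss in Minkowski 3-space, and suppose there is a constant c with ⟨α_s(s,0), α_s(s,0)⟩_L = c for all s. Then ⟨α_s(s,t), α_s(s,t)⟩_L = c for all (s,t). In particular, if α(·,0) is parametrized by arc length (that is, |⟨α_s(s,0), α_s(s,0)⟩_L| = 1 for all s), then so is α(·,t) for all t. -/
noncomputable section

open Real

/-- Minkowski 3-space: ℝ³ as a vector type. -/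
abbrev V3 : Type := Fin 3 → ℝ

/-- Lorentzian inner product ⟨x,y⟩_L = −x₁y₁ + x₂y₂ + x₃y₃ on ℝ³. -/
def lor (x y : V3) : ℝ := -(x 0 * y 0) + x 1 * y 1 + x 2 * y 2

/-- Lorentzian cross product x ×_L y = (x₃y₂ − x₂y₃, x₃y₁ − x₁y₃, x₁y₂ − x₂y₁). -/
def lcross (x y : V3) : V3 :=
  ![x 2 * y 1 - x 1 * y 2, x 2 * y 0 - x 0 * y 2, x 0 * y 1 - x 1 * y 0]

/-- Partial derivative with respect to the first variable `s`. -/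
def pds {E : Type*} [NormedAddCommGroup E] [NormedSpace ℝ E]
    (f : ℝ × ℝ → E) (p : ℝ × ℝ) : E := deriv (fun s => f (s, p.2)) p.1

/-- Partial derivative with respect to the second variable `t`. -/
def pdt {E : Type*} [NormedAddCommGroup E] [NormedSpace ℝ E]
    (f : ℝ × ℝ → E) (p : ℝ × ℝ) : E := deriv (fun t => f (p.1, t)) p.2

section helpers

variable {E : Type*} [NormedAddCommGroup E] [NormedSpace ℝ E]

lemma hasDerivAt_s {f : ℝ × ℝ → E} (hf : Differentiable ℝ f) (s t : ℝ) :
    HasDerivAt (fun s => f (s, t)) (fderiv ℝ f (s, t) (1, 0)) s :=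
  (hf (s, t)).hasFDerivAt.comp_hasDerivAt s ((hasDerivAt_id s).prodMk (hasDerivAt_const s t))

lemma hasDerivAt_t {f : ℝ × ℝ → E} (hf : Differentiable ℝ f) (s t : ℝ) :
    HasDerivAt (fun t => f (s, t)) (fderiv ℝ f (s, t) (0, 1)) t :=
  (hf (s, t)).hasFDerivAt.comp_hasDerivAt t ((hasDerivAt_const t s).prodMk (hasDerivAt_id t))

lemma pds_eq {f : ℝ × ℝ → E} (hf : Differentiable ℝ f) :
    pds f = fun p => fderiv ℝ f p (1, 0) := by
  funext p
  exact (hasDerivAt_s hf p.1 p.2).deriv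

lemma pdt_eq {f : ℝ × ℝ → E} (hf : Differentiable ℝ f) :
    pdt f = fun p => fderiv ℝ f p (0, 1) := by
  funext p
  exact (hasDerivAt_t hf p.1 p.2).deriv

lemma contDiff_pds {f : ℝ × ℝ → E} (hf : ContDiff ℝ (⊤ : ℕ∞) f) :
    ContDiff ℝ (⊤ : ℕ∞) (pds f) := by
  rw [pds_eq (hf.differentiable (by simp))]
  exact (hf.fderiv_right (m := (⊤ : ℕ∞)) (by simp)).clm_apply contDiff_const

lemma contDiff_pdt {f : ℝ × ℝ → E} (hf : ContDiff ℝ (⊤ : ℕ∞) f) :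
    ContDiff ℝ (⊤ : ℕ∞) (pdt f) := by
  rw [pdt_eq (hf.differentiable (by simp))]
  exact (hf.fderiv_right (m := (⊤ : ℕ∞)) (by simp)).clm_apply contDiff_const

lemma pdt_pds_comm {f : ℝ × ℝ → E} (hf : ContDiff ℝ (⊤ : ℕ∞) f) (p : ℝ × ℝ) :
    pdt (pds f) p = pds (pdt f) p := by
  have hd : Differentiable ℝ f := hf.differentiable (by simp)
  have hdd : Differentiable ℝ (fderiv ℝ f) :=
    (hf.fderiv_right (m := (⊤ : ℕ∞)) (by simp)).differentiable (by simp)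
  rw [pdt_eq ((contDiff_pds hf).differentiable (by simp)),
    pds_eq ((contDiff_pdt hf).differentiable (by simp)), pds_eq hd, pdt_eq hd]
  have key : ∀ v w : ℝ × ℝ, fderiv ℝ (fun q => fderiv ℝ f q v) p w
      = fderiv ℝ (fderiv ℝ f) p w v := by
    intro v w
    have h := (hdd p).hasFDerivAt.clm_apply (hasFDerivAt_const v p)
    rw [h.fderiv]
    simp
  simp only [key]
  have hs : IsSymmSndFDerivAt ℝ f p :=
    (hf.contDiffAt).isSymmSndFDerivAt (by simp; exact WithTop.coe_le_coe.2 (le_top : (2 : ℕ∞) ≤ ⊤))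
  exact hs.eq _ _

end helpers

/-- If `α : ℝ × ℝ → ℝ³` is a smooth solution of the vortex filament
equation `α_t = α_s ×_L α_ss` in Minkowski 3-space and `⟨α_s(s,0), α_s(s,0)⟩_L = c`
for all `s`, then `⟨α_s(s,t), α_s(s,t)⟩_L = c` for all `(s,t)`.  In particular, if
`α(·,0)` is parametrized by arc length (`|⟨α_s(s,0),α_s(s,0)⟩_L| = 1` for all `s`),
then so is `α(·,t)` for every `t`. -/
theorem statement1 (α : ℝ × ℝ → V3) (hα : ContDiff ℝ (⊤ : ℕ∞) α)
    (hvfe : ∀ p, pdt α p = lcross (pds α p) (pds (pds α) p))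
    (c : ℝ) (hc : ∀ s : ℝ, lor (pds α (s, 0)) (pds α (s, 0)) = c) :
    (∀ s t : ℝ, lor (pds α (s, t)) (pds α (s, t)) = c) ∧
    ((∀ s : ℝ, |lor (pds α (s, 0)) (pds α (s, 0))| = 1) →
      ∀ s t : ℝ, |lor (pds α (s, t)) (pds α (s, t))| = 1) := by
  have key : ∀ s t : ℝ, lor (pds α (s, t)) (pds α (s, t)) = c := by
    intro s t
    have h1 := contDiff_pds hα
    have h2 := contDiff_pds h1
    have hd1 : Differentiable ℝ (pds α) := h1.differentiable (by simp)
    have hd2 : Differentiable ℝ (pds (pds α)) := h2.differentiable (by simp)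
    have hder : ∀ τ, HasDerivAt (fun τ => lor (pds α (s, τ)) (pds α (s, τ))) 0 τ := by
      intro τ
      -- time derivative of the tangent
      have ht : HasDerivAt (fun τ => pds α (s, τ)) (pdt (pds α) (s, τ)) τ := by
        rw [pdt_eq hd1]; exact hasDerivAt_t hd1 s τ
      have hA : HasDerivAt (fun σ => pds α (σ, τ)) (pds (pds α) (s, τ)) s := by
        have := hasDerivAt_s hd1 s τ
        rwa [pds_eq hd1]
      have hB : HasDerivAt (fun σ => pds (pds α) (σ, τ)) (pds (pds (pds α)) (s, τ)) s := by
        have := hasDerivAt_s hd2 s τ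
        rwa [pds_eq hd2]
      have hS : HasDerivAt (fun σ => pdt α (σ, τ)) (pdt (pds α) (s, τ)) s := by
        have hdt : Differentiable ℝ (pdt α) := (contDiff_pdt hα).differentiable (by simp)
        rw [pdt_pds_comm hα, pds_eq hdt]
        exact hasDerivAt_s hdt s τ
      have ht' := hasDerivAt_pi.1 ht
      have hA' := hasDerivAt_pi.1 hA
      have hB' := hasDerivAt_pi.1 hB
      have hS' := hasDerivAt_pi.1 hS
      simp only [hvfe] at hS'
      have e0 := (hS' 0).unique (((hA' 2).mul (hB' 1)).sub ((hA' 1).mul (hB' 2)))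
      have e1 := (hS' 1).unique (((hA' 2).mul (hB' 0)).sub ((hA' 0).mul (hB' 2)))
      have e2 := (hS' 2).unique (((hA' 0).mul (hB' 1)).sub ((hA' 1).mul (hB' 0)))
      have := (((ht' 0).mul (ht' 0)).neg.add ((ht' 1).mul (ht' 1))).add ((ht' 2).mul (ht' 2))
      refine HasDerivAt.congr_deriv this ?_
      rw [e0, e1, e2]
      ring
    have := is_const_of_deriv_eq_zero (fun τ => (hder τ).differentiableAt)
      (fun τ => (hder τ).deriv) t 0
    exact this.trans (hc s)
  refine ⟨key, fun h s t => ?_⟩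
  rw [key s t, ← hc s]
  exact h s
end
end

section
/- Let α : ℝ × ℝ → ℝ³ be a smooth solution of the vortex filament equation α_t = α_s ×_L α_ss in Minkowski 3-space such that each curve α(·,t) is a unit-speed timelike curve with smooth Frenet frame (T, N, B) satisfying ⟨T,T⟩_L = −1, ⟨N,N⟩_L = ⟨B,B⟩_L = 1, T ×_L N = B, Tₛ = κN, Nₛ = κT + τB, Bₛ = −τN with κ > 0. Then there exist smooth maps E₁, E₂ : ℝ × ℝ → ℝ³ and smooth functions k₁, k₂ : ℝ × ℝ → ℝ such that (T, E₁, E₂) is pairwise ⟨·,·⟩_L-orthogonal with ⟨E₁,E₁⟩_L = ⟨E₂,E₂⟩_L = 1, and Tₛ = k₁E₁ + k₂E₂, (E₁)ₛ = k₁T, (E₂)ₛ = k₂T, and T_t = −(k₂)ₛE₁ + (k₁)ₛE₂, (E₁)_t = −(k₂)ₛT + ½(k₁² + k₂²)E₂, (E₂)_t = (k₁)ₛT − ½(k₁² + k₂²)E₁. -/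
noncomputable section

open Real

/-- Smooth maps. -/
def Sm {E : Type*} [NormedAddCommGroup E] [NormedSpace ℝ E] (f : ℝ × ℝ → E) : Prop :=
  ContDiff ℝ (⊤ : ℕ∞) f

/-- Directional derivative. -/
def Dv {E : Type*} [NormedAddCommGroup E] [NormedSpace ℝ E] (v : ℝ × ℝ)
    (f : ℝ × ℝ → E) (p : ℝ × ℝ) : E := fderiv ℝ f p v

section rules
variable {E : Type*} [NormedAddCommGroup E] [NormedSpace ℝ E]

lemma Sm.da {f : ℝ × ℝ → E} (hf : Sm f) (p) : DifferentiableAt ℝ f p :=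
  (ContDiff.differentiable hf (by simp)) p

lemma Sm.Dv {f : ℝ × ℝ → E} (hf : Sm f) (v) : Sm (Dv v f) := by
  have h := (contDiff_infty_iff_fderiv.1 hf).2
  exact h.clm_apply contDiff_const

lemma pds_eq_s6 {f : ℝ × ℝ → E} (hf : Sm f) : pds f = Dv (1, 0) f := by
  funext p
  have h1 : HasDerivAt (fun s : ℝ => (s, p.2)) ((1 : ℝ), (0 : ℝ)) p.1 :=
    (hasDerivAt_id p.1).prodMk (hasDerivAt_const p.1 p.2)
  exact (HasFDerivAt.comp_hasDerivAt (f := fun s : ℝ => (s, p.2)) p.1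
    (hf.da p).hasFDerivAt h1).deriv

lemma pdt_eq_s6 {f : ℝ × ℝ → E} (hf : Sm f) : pdt f = Dv (0, 1) f := by
  funext p
  have h1 : HasDerivAt (fun s : ℝ => (p.1, s)) ((0 : ℝ), (1 : ℝ)) p.2 :=
    (hasDerivAt_const p.2 p.1).prodMk (hasDerivAt_id p.2)
  exact (HasFDerivAt.comp_hasDerivAt (f := fun s : ℝ => (p.1, s)) p.2
    (hf.da p).hasFDerivAt h1).deriv

lemma Dv_comm {f : ℝ × ℝ → E} (hf : Sm f) (v w) : Dv v (Dv w f) = Dv w (Dv v f) := by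
  funext p
  have h := (contDiff_infty_iff_fderiv.1 hf).2
  have hd : DifferentiableAt ℝ (fderiv ℝ f) p := (ContDiff.differentiable h (by simp)) p
  have key : ∀ a b, Dv a (Dv b f) p = fderiv ℝ (fderiv ℝ f) p a b := by
    intro a b
    have := (hd.hasFDerivAt.clm_apply (hasFDerivAt_const b p)).fderiv
    unfold Dv
    rw [this]; simp
  rw [key, key]
  have : ContDiffAt ℝ (⊤ : ℕ∞) f p := ContDiff.contDiffAt hf
  refine this.isSymmSndFDerivAt ?_ v w
  simp only [minSmoothness_of_isRCLikeNormedField]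
  exact WithTop.coe_le_coe.2 (le_top : (2 : ℕ∞) ≤ ⊤)

lemma Dv_const (c : E) (v p) : Dv v (fun _ => c) p = 0 := by
  simp [Dv]

lemma Dv_add {f g : ℝ × ℝ → E} (hf : Sm f) (hg : Sm g) (v p) :
    Dv v (fun q => f q + g q) p = Dv v f p + Dv v g p := by
  unfold Dv; rw [fderiv_fun_add (hf.da p) (hg.da p)]; simp

lemma Dv_sub {f g : ℝ × ℝ → E} (hf : Sm f) (hg : Sm g) (v p) :
    Dv v (fun q => f q - g q) p = Dv v f p - Dv v g p := by
  unfold Dv; rw [fderiv_fun_sub (hf.da p) (hg.da p)]; simp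

lemma Dv_smul {a : ℝ × ℝ → ℝ} {f : ℝ × ℝ → E} (ha : Sm a) (hf : Sm f) (v p) :
    Dv v (fun q => a q • f q) p = Dv v a p • f p + a p • Dv v f p := by
  unfold Dv; rw [fderiv_fun_smul (ha.da p) (hf.da p)]; simp [add_comm]

lemma Dv_mul {a f : ℝ × ℝ → ℝ} (ha : Sm a) (hf : Sm f) (v p) :
    Dv v (fun q => a q * f q) p = Dv v a p * f p + a p * Dv v f p := Dv_smul ha hf v p

lemma Dv_apply {f : ℝ × ℝ → V3} (hf : Sm f) (i v p) :
    Dv v (fun q => f q i) p = Dv v f p i := by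
  unfold Dv
  have := (hasFDerivAt_pi'.1 (hf.da p).hasFDerivAt i).fderiv
  rw [this]; simp

lemma Sm.apply {f : ℝ × ℝ → V3} (hf : Sm f) (i) : Sm (fun q => f q i) := contDiff_pi.1 hf i
lemma Sm.add {f g : ℝ × ℝ → E} (hf : Sm f) (hg : Sm g) : Sm (fun q => f q + g q) :=
  ContDiff.add hf hg
lemma Sm.sub {f g : ℝ × ℝ → E} (hf : Sm f) (hg : Sm g) : Sm (fun q => f q - g q) :=
  ContDiff.sub hf hg
lemma Sm.smul {a : ℝ × ℝ → ℝ} {g : ℝ × ℝ → E} (hf : Sm a) (hg : Sm g) :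
    Sm (fun q => a q • g q) := ContDiff.smul hf hg
lemma Sm.mul {a g : ℝ × ℝ → ℝ} (hf : Sm a) (hg : Sm g) :
    Sm (fun q => a q * g q) := ContDiff.mul hf hg
lemma Sm.neg {g : ℝ × ℝ → E} (hg : Sm g) : Sm (fun q => - g q) := ContDiff.neg hg
lemma Sm.cos {g : ℝ × ℝ → ℝ} (hg : Sm g) : Sm (fun q => Real.cos (g q)) := ContDiff.cos hg
lemma Sm.sin {g : ℝ × ℝ → ℝ} (hg : Sm g) : Sm (fun q => Real.sin (g q)) := ContDiff.sin hg
lemma Sm.lor {f g : ℝ × ℝ → V3} (hf : Sm f) (hg : Sm g) : Sm (fun q => lor (f q) (g q)) :=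
  ((((hf.apply 0).mul (hg.apply 0)).neg).add ((hf.apply 1).mul (hg.apply 1))).add
    ((hf.apply 2).mul (hg.apply 2))

lemma Dv_neg {g : ℝ × ℝ → E} (v p) : Dv v (fun q => - g q) p = - Dv v g p := by
  unfold Dv; rw [fderiv_fun_neg]; simp

lemma Dv_cos {g : ℝ × ℝ → ℝ} (hg : Sm g) (v p) :
    Dv v (fun q => Real.cos (g q)) p = -Real.sin (g p) * Dv v g p := by
  unfold Dv; rw [fderiv_cos (hg.da p)]; simp

lemma Dv_sin {g : ℝ × ℝ → ℝ} (hg : Sm g) (v p) :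
    Dv v (fun q => Real.sin (g q)) p = Real.cos (g p) * Dv v g p := by
  unfold Dv; rw [fderiv_sin (hg.da p)]; simp

lemma Dv_lor {f g : ℝ × ℝ → V3} (hf : Sm f) (hg : Sm g) (v p) :
    Dv v (fun q => lor (f q) (g q)) p = lor (Dv v f p) (g p) + lor (f p) (Dv v g p) := by
  have h (i) := (hf.apply i).mul (hg.apply i)
  have e := Dv_add (((h 0).neg).add (h 1)) (h 2) v p
  rw [Dv_add ((h 0).neg) (h 1), Dv_neg, Dv_mul (hf.apply 0) (hg.apply 0),
    Dv_mul (hf.apply 1) (hg.apply 1), Dv_mul (hf.apply 2) (hg.apply 2)] at e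
  simp only [Dv_apply hf, Dv_apply hg] at e
  refine e.trans ?_
  unfold lor; ring

/-- Poincaré lemma in the plane. -/
lemma poincare {a b : ℝ × ℝ → ℝ} (ha : Sm a) (hb : Sm b)
    (h : ∀ p, Dv (0, 1) a p = Dv (1, 0) b p) :
    ∃ θ, Sm θ ∧ (∀ p, Dv (1, 0) θ p = a p) ∧ ∀ p, Dv (0, 1) θ p = b p := by
  let ω : ℝ × ℝ → (ℝ × ℝ →L[ℝ] ℝ) := fun p =>
    a p • ContinuousLinearMap.fst ℝ ℝ ℝ + b p • ContinuousLinearMap.snd ℝ ℝ ℝ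
  have hω : Sm ω := (ha.smul (contDiff_const : Sm _)).add (hb.smul (contDiff_const : Sm _))
  have hd : ∀ p x, fderiv ℝ ω p x = Dv x a p • ContinuousLinearMap.fst ℝ ℝ ℝ
      + Dv x b p • ContinuousLinearMap.snd ℝ ℝ ℝ := by
    intro p x
    have e := Dv_add (ha.smul (contDiff_const : Sm fun _ => ContinuousLinearMap.fst ℝ ℝ ℝ))
      (hb.smul (contDiff_const : Sm fun _ => ContinuousLinearMap.snd ℝ ℝ ℝ)) x p
    rw [Dv_smul ha contDiff_const, Dv_smul hb contDiff_const, Dv_const, Dv_const] at e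
    rw [smul_zero, smul_zero, add_zero, add_zero] at e
    exact e
  have lin : ∀ (f : ℝ × ℝ → ℝ) (p x : ℝ × ℝ),
      Dv x f p = x.1 * Dv (1, 0) f p + x.2 * Dv (0, 1) f p := by
    intro f p x
    unfold Dv
    have : x = x.1 • ((1 : ℝ), (0 : ℝ)) + x.2 • ((0 : ℝ), (1 : ℝ)) := by
      ext <;> simp
    conv_lhs => rw [this]
    rw [map_add, map_smul, map_smul]; simp
  obtain ⟨θ, hθ⟩ := (convex_univ (𝕜 := ℝ) (E := ℝ × ℝ)).exists_forall_hasFDerivAt_of_fderiv_symmetric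
    isOpen_univ (ω := ω) (fun p _ => (hω.da p).differentiableWithinAt) (by
      intro p _ x y
      rw [hd, hd]
      simp only [add_apply, smul_apply, ContinuousLinearMap.coe_fst',
        ContinuousLinearMap.coe_snd', smul_eq_mul]
      rw [lin a p x, lin a p y, lin b p x, lin b p y, h p]
      ring)
  have hθ' : ∀ p, HasFDerivAt θ (ω p) p := fun p => hθ p trivial
  have hf : fderiv ℝ θ = ω := funext fun p => (hθ' p).fderiv
  refine ⟨θ, contDiff_infty_iff_fderiv.2 ⟨fun p => (hθ' p).differentiableAt, hf ▸ hω⟩, ?_, ?_⟩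
  · intro p; simp [Dv, hf, ω]
  · intro p; simp [Dv, hf, ω]

lemma lor_comm (x y : V3) : lor x y = lor y x := by unfold lor; ring
lemma lor_add_left (x y z : V3) : lor (x + y) z = lor x z + lor y z := by
  simp [lor]; ring
lemma lor_smul_left (a : ℝ) (y z : V3) : lor (a • y) z = a * lor y z := by
  simp [lor]; ring
lemma lor_add_right (x y z : V3) : lor z (x + y) = lor z x + lor z y := by
  simp [lor]; ring
lemma lor_smul_right (a : ℝ) (y z : V3) : lor z (a • y) = a * lor z y := by
  simp [lor]; ring
lemma lor_sub_left (x y z : V3) : lor (x - y) z = lor x z - lor y z := by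
  simp [lor]; ring
lemma lor_sub_right (x y z : V3) : lor z (x - y) = lor z x - lor z y := by
  simp [lor]; ring

lemma lor_nondeg {T N B u : V3} (h : lcross T N = B) (hB : lor B B = 1)
    (h1 : lor u T = 0) (h2 : lor u N = 0) (h3 : lor u B = 0) : u = 0 := by
  have b0 : B 0 = T 2 * N 1 - T 1 * N 2 := by subst h; simp [lcross]
  have b1 : B 1 = T 2 * N 0 - T 0 * N 2 := by subst h; simp [lcross]
  have b2 : B 2 = T 0 * N 1 - T 1 * N 0 := by subst h; simp [lcross]
  simp only [lor] at *
  have e0 : u 0 = 0 := by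
    linear_combination -u 0 * hB - h1 * (N 1 * B 2 - N 2 * B 1) - h2 * (B 1 * T 2 - B 2 * T 1)
      + h3 * (T 2 * N 1 - T 1 * N 2) + u 0 * (-(B 0) * b0 + B 1 * b1 + B 2 * b2)
  have e1 : u 1 = 0 := by
    linear_combination -u 1 * hB - h1 * (-(N 2 * B 0) + N 0 * B 2) - h2 * (-(B 2 * T 0) + B 0 * T 2)
      + h3 * (T 2 * N 0 - T 0 * N 2) + u 1 * (-(B 0) * b0 + B 1 * b1 + B 2 * b2)
  have e2 : u 2 = 0 := by
    linear_combination -u 2 * hB - h1 * (-(N 0 * B 1) + N 1 * B 0) - h2 * (-(B 0 * T 1) + B 1 * T 0)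
      + h3 * (T 0 * N 1 - T 1 * N 0) + u 2 * (-(B 0) * b0 + B 1 * b1 + B 2 * b2)
  funext i; fin_cases i <;> assumption

lemma lor_expand {T N B : V3} (h : lcross T N = B) (hT : lor T T = -1) (hN : lor N N = 1)
    (hB : lor B B = 1) (hTN : lor T N = 0) (v : V3) :
    v = -(lor v T) • T + lor v N • N + lor v B • B := by
  have hTB : lor T B = 0 := by subst h; simp [lor, lcross]; ring
  have hNB : lor N B = 0 := by subst h; simp [lor, lcross]; ring
  have hu := lor_nondeg (u := v - (-(lor v T) • T + lor v N • N + lor v B • B)) h hB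
    (by simp only [lor_sub_left, lor_add_left, lor_smul_left, hT, lor_comm N T, lor_comm B T, hTN, hTB]; ring)
    (by simp only [lor_sub_left, lor_add_left, lor_smul_left, hN, lor_comm B N, hTN, hNB]; ring)
    (by simp only [lor_sub_left, lor_add_left, lor_smul_left, hB, hNB, hTB]; ring)
  exact sub_eq_zero.1 hu

end rules

/-- For a smooth solution `α` of the vortex filament equation whose
curves `α(·,t)` are unit-speed timelike with smooth Frenet frame `(T,N,B)`
(`⟨T,T⟩_L = −1`, `⟨N,N⟩_L = ⟨B,B⟩_L = 1`, `T ×_L N = B`, Frenet equations with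
`κ > 0`), there exists a parallel normal frame `(T,E₁,E₂)` with principal curvatures
`k₁, k₂` satisfying the stated `s`- and `t`-evolution equations. -/
theorem statement6 (α T N B : ℝ × ℝ → V3) (κ τ : ℝ × ℝ → ℝ)
    (hα : ContDiff ℝ (⊤ : ℕ∞) α) (hT : ContDiff ℝ (⊤ : ℕ∞) T) (hN : ContDiff ℝ (⊤ : ℕ∞) N)
    (hB : ContDiff ℝ (⊤ : ℕ∞) B) (hκ : ContDiff ℝ (⊤ : ℕ∞) κ) (hτ : ContDiff ℝ (⊤ : ℕ∞) τ)
    (hvfe : ∀ p, pdt α p = lcross (pds α p) (pds (pds α) p))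
    (hαs : ∀ p, pds α p = T p)
    (hTT : ∀ p, lor (T p) (T p) = -1)
    (hNN : ∀ p, lor (N p) (N p) = 1)
    (hBB : ∀ p, lor (B p) (B p) = 1)
    (hTxN : ∀ p, lcross (T p) (N p) = B p)
    (hTs : ∀ p, pds T p = κ p • N p)
    (hNs : ∀ p, pds N p = κ p • T p + τ p • B p)
    (hBs : ∀ p, pds B p = -(τ p) • N p)
    (hκpos : ∀ p, 0 < κ p) :
    ∃ E₁ E₂ : ℝ × ℝ → V3, ∃ k₁ k₂ : ℝ × ℝ → ℝ,
      ContDiff ℝ (⊤ : ℕ∞) E₁ ∧ ContDiff ℝ (⊤ : ℕ∞) E₂ ∧ ContDiff ℝ (⊤ : ℕ∞) k₁ ∧ ContDiff ℝ (⊤ : ℕ∞) k₂ ∧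
      (∀ p, lor (E₁ p) (E₁ p) = 1) ∧
      (∀ p, lor (E₂ p) (E₂ p) = 1) ∧
      (∀ p, lor (T p) (E₁ p) = 0) ∧
      (∀ p, lor (T p) (E₂ p) = 0) ∧
      (∀ p, lor (E₁ p) (E₂ p) = 0) ∧
      (∀ p, pds T p = k₁ p • E₁ p + k₂ p • E₂ p) ∧
      (∀ p, pds E₁ p = k₁ p • T p) ∧
      (∀ p, pds E₂ p = k₂ p • T p) ∧
      (∀ p, pdt T p = -(pds k₂ p) • E₁ p + (pds k₁ p) • E₂ p) ∧
      (∀ p, pdt E₁ p = -(pds k₂ p) • T p + ((k₁ p ^ 2 + k₂ p ^ 2) / 2) • E₂ p) ∧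
      (∀ p, pdt E₂ p = (pds k₁ p) • T p - ((k₁ p ^ 2 + k₂ p ^ 2) / 2) • E₁ p) := by
  rw [pds_eq_s6 hT] at hTs ⊢
  rw [pds_eq_s6 hN] at hNs
  rw [pds_eq_s6 hB] at hBs
  have hαT : Dv (1, 0) α = T := by rw [← pds_eq_s6 hα]; exact funext hαs
  have hαt : Dv (0, 1) α = fun q => κ q • B q := by
    funext p
    have e := hvfe p
    rw [pdt_eq_s6 hα, pds_eq_s6 hα, hαT, pds_eq_s6 hT, hTs, ] at e
    rw [e, ← hTxN]
    funext i; fin_cases i <;> simp [lcross] <;> ring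
  have hTt : ∀ p, Dv (0, 1) T p = Dv (1, 0) κ p • B p + κ p • (-(τ p) • N p) := by
    intro p
    rw [← hαT, Dv_comm hα, hαt, Dv_smul hκ hB, hBs]
  have hTN : ∀ p, lor (T p) (N p) = 0 := by
    intro p
    have e := Dv_lor hT hT (1, 0) p
    simp only [hTT, Dv_const, hTs, lor_smul_left, lor_smul_right] at e
    rw [lor_comm (N p)] at e
    have := (hκpos p).ne'
    have e2 : κ p * lor (T p) (N p) = 0 := by linarith
    exact (mul_eq_zero.1 e2).resolve_left this
  have hTB : ∀ p, lor (T p) (B p) = 0 := by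
    intro p; rw [← hTxN]; simp [lor, lcross]; ring
  have hNB : ∀ p, lor (N p) (B p) = 0 := by
    intro p; rw [← hTxN]; simp [lor, lcross]; ring
  have hNT : ∀ p, lor (N p) (T p) = 0 := fun p => by rw [lor_comm, hTN]
  have hBT : ∀ p, lor (B p) (T p) = 0 := fun p => by rw [lor_comm, hTB]
  have hBN : ∀ p, lor (B p) (N p) = 0 := fun p => by rw [lor_comm, hNB]
  let b : ℝ × ℝ → ℝ := fun q => lor (Dv (0, 1) N q) (B q)
  have hb : Sm b := Sm.lor (Sm.Dv hN _) hB
  have hNtN : ∀ p, lor (Dv (0, 1) N p) (N p) = 0 := by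
    intro p
    have e := Dv_lor hN hN (0, 1) p
    simp only [hNN, Dv_const] at e
    rw [lor_comm (N p)] at e
    linarith
  have hBtB : ∀ p, lor (Dv (0, 1) B p) (B p) = 0 := by
    intro p
    have e := Dv_lor hB hB (0, 1) p
    simp only [hBB, Dv_const] at e
    rw [lor_comm (B p)] at e
    linarith
  have hNtT : ∀ p, lor (Dv (0, 1) N p) (T p) = κ p * τ p := by
    intro p
    have e := Dv_lor hN hT (0, 1) p
    simp only [hNT, Dv_const, hTt, lor_add_right, lor_smul_right, hNB, hNN] at e
    linarith
  have hBtT : ∀ p, lor (Dv (0, 1) B p) (T p) = - Dv (1, 0) κ p := by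
    intro p
    have e := Dv_lor hB hT (0, 1) p
    simp only [hBT, Dv_const, hTt, lor_add_right, lor_smul_right, hBB, hBN] at e
    linarith
  have hBtN : ∀ p, lor (Dv (0, 1) B p) (N p) = - b p := by
    intro p
    have e := Dv_lor hB hN (0, 1) p
    simp only [hBN, Dv_const] at e
    rw [lor_comm (B p)] at e
    simp only [b]
    linarith
  have hNt : ∀ p, Dv (0, 1) N p = -(κ p * τ p) • T p + b p • B p := by
    intro p
    have e := lor_expand (hTxN p) (hTT p) (hNN p) (hBB p) (hTN p) (Dv (0, 1) N p)
    rw [hNtT, hNtN, zero_smul, add_zero] at e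
    exact e
  have hBt : ∀ p, Dv (0, 1) B p = Dv (1, 0) κ p • T p + -(b p) • N p := by
    intro p
    have e := lor_expand (hTxN p) (hTT p) (hNN p) (hBB p) (hTN p) (Dv (0, 1) B p)
    rw [hBtT, hBtN, hBtB, zero_smul, add_zero, neg_neg] at e
    exact e
  have hbs : ∀ p, Dv (1, 0) b p = κ p * Dv (1, 0) κ p + Dv (0, 1) τ p := by
    intro p
    have e := Dv_lor (Sm.Dv hN (0, 1)) hB (1, 0) p
    rw [Dv_comm hN, funext hNs, Dv_add (Sm.smul hκ hT) (Sm.smul hτ hB), Dv_smul hκ hT,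
      Dv_smul hτ hB, hBs] at e
    simp only [lor_add_left, lor_smul_left, lor_smul_right, hTt, hTB, hBB, hNB, hBtB, hNtN] at e
    exact e.trans (by ring)
  have hg : Sm (fun q => b q - (1 / 2) * (κ q * κ q)) :=
    hb.sub (Sm.mul (contDiff_const : Sm _) (Sm.mul hκ hκ))
  obtain ⟨θ, hθ, hθs, hθt⟩ := poincare (a := τ) hτ hg (by
    intro p
    rw [Dv_sub hb (Sm.mul (contDiff_const : Sm _) (Sm.mul hκ hκ)),
      Dv_mul (contDiff_const : Sm _) (Sm.mul hκ hκ), Dv_const, Dv_mul hκ hκ, hbs]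
    ring)
  have hc := hθ.cos
  have hs := hθ.sin
  have hk1 : Sm (fun q => κ q * cos (θ q)) := Sm.mul hκ hc
  have hk2 : Sm (fun q => κ q * sin (θ q)) := Sm.mul hκ hs
  have hE1 : Sm (fun q => cos (θ q) • N q - sin (θ q) • B q) := (hc.smul hN).sub (hs.smul hB)
  have hE2 : Sm (fun q => sin (θ q) • N q + cos (θ q) • B q) := (hs.smul hN).add (hc.smul hB)
  refine ⟨_, _, _, _, hE1, hE2, hk1, hk2, ?_⟩
  rw [pds_eq_s6 hE1, pds_eq_s6 hE2, pds_eq_s6 hk1, pds_eq_s6 hk2, pdt_eq_s6 hT, pdt_eq_s6 hE1, pdt_eq_s6 hE2]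
  simp only [Dv_sub (hc.smul hN) (hs.smul hB), Dv_add (hs.smul hN) (hc.smul hB),
    Dv_smul hc hN, Dv_smul hs hB, Dv_smul hs hN, Dv_smul hc hB, Dv_mul hκ hc, Dv_mul hκ hs,
    Dv_cos hθ, Dv_sin hθ, hθs, hθt, hTs, hNs, hBs, hNt, hBt, hTt,
    lor_add_left, lor_add_right, lor_sub_left, lor_sub_right, lor_smul_left, lor_smul_right,
    hTT, hNN, hBB, hTN, hTB, hNB, hNT, hBT, hBN]
  have hsc := fun p => sin_sq_add_cos_sq (θ p)
  refine ⟨?_, ?_, ?_, ?_, ?_, ?_, ?_, ?_, ?_, ?_, ?_⟩ <;> intro p <;> have h := hsc p <;>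
    generalize sin (θ p) = S at * <;> generalize cos (θ p) = C at *
  · linear_combination h
  · linear_combination h
  · ring
  · ring
  · ring
  · ext i
    simp only [Pi.add_apply, Pi.sub_apply, Pi.smul_apply, smul_eq_mul]
    linear_combination -(κ p * N p i) * h
  · ext i
    simp only [Pi.add_apply, Pi.sub_apply, Pi.smul_apply, smul_eq_mul]
    ring
  · ext i
    simp only [Pi.add_apply, Pi.sub_apply, Pi.smul_apply, smul_eq_mul]
    ring
  · ext i
    simp only [Pi.add_apply, Pi.sub_apply, Pi.smul_apply, smul_eq_mul]
    linear_combination (-(Dv (1, 0) κ p * B p i) + κ p * τ p * N p i) * h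
  · ext i
    simp only [Pi.add_apply, Pi.sub_apply, Pi.smul_apply, smul_eq_mul]
    linear_combination (-(κ p ^ 2 / 2) * (S * N p i + C * B p i)) * h
  · ext i
    simp only [Pi.add_apply, Pi.sub_apply, Pi.smul_apply, smul_eq_mul]
    linear_combination ((κ p ^ 2 / 2) * (C * N p i - S * B p i)) * h
end
end

section
/- Let T, E₁, E₂ : ℝ × ℝ → ℝ³ and k₁, k₂ : ℝ × ℝ → ℝ be smooth with (T, E₁, E₂) pairwise ⟨·,·⟩_L-orthogonal, ⟨T,T⟩_L = ⟨E₂,E₂⟩_L = 1, ⟨E₁,E₁⟩_L = −1, satisfying Tₛ = k₁E₁ + k₂E₂, (E₁)ₛ = k₁T, (E₂)ₛ = −k₂T, and T_t = (k₂)ₛE₁ + (k₁)ₛE₂, (E₁)_t = (k₂)ₛT + uE₂, (E₂)_t = −(k₁)ₛT + uE₁ for a smooth function u : ℝ × ℝ → ℝ. Then uₛ = k₁(k₁)ₛ − k₂(k₂)ₛ; consequently, for each t there is a constant c(t) with u(s,t) = ½(k₁² − k₂²)(s,t) + c(t). -/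
noncomputable section

open Real

lemma pds_eq_s11 {E : Type*} [NormedAddCommGroup E] [NormedSpace ℝ E] {f : ℝ × ℝ → E}
    (hf : Differentiable ℝ f) (p : ℝ × ℝ) :
    HasDerivAt (fun s => f (s, p.2)) (fderiv ℝ f p (1, 0)) p.1 := by
  have h1 : HasDerivAt (fun s : ℝ => (s, p.2)) ((1 : ℝ), (0 : ℝ)) p.1 :=
    (hasDerivAt_id p.1).prodMk (hasDerivAt_const p.1 p.2)
  exact HasFDerivAt.comp_hasDerivAt (f := fun s : ℝ => (s, p.2)) p.1 (hf p).hasFDerivAt h1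

lemma pdt_eq_s11 {E : Type*} [NormedAddCommGroup E] [NormedSpace ℝ E] {f : ℝ × ℝ → E}
    (hf : Differentiable ℝ f) (p : ℝ × ℝ) :
    HasDerivAt (fun t => f (p.1, t)) (fderiv ℝ f p (0, 1)) p.2 := by
  have h1 : HasDerivAt (fun t : ℝ => (p.1, t)) ((0 : ℝ), (1 : ℝ)) p.2 :=
    (hasDerivAt_const p.2 p.1).prodMk (hasDerivAt_id p.2)
  exact HasFDerivAt.comp_hasDerivAt (f := fun t : ℝ => (p.1, t)) p.2 (hf p).hasFDerivAt h1

lemma hasDerivAt_pds {E : Type*} [NormedAddCommGroup E] [NormedSpace ℝ E] {f : ℝ × ℝ → E}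
    (hf : ContDiff ℝ (⊤ : ℕ∞) f) (p : ℝ × ℝ) :
    HasDerivAt (fun s => f (s, p.2)) (pds f p) p.1 := by
  have h := pds_eq_s11 (hf.differentiable (by simp)) p
  have h2 : pds f p = _ := h.deriv
  rw [h2]; exact h

lemma hasDerivAt_pdt {E : Type*} [NormedAddCommGroup E] [NormedSpace ℝ E] {f : ℝ × ℝ → E}
    (hf : ContDiff ℝ (⊤ : ℕ∞) f) (p : ℝ × ℝ) :
    HasDerivAt (fun t => f (p.1, t)) (pdt f p) p.2 := by
  have h := pdt_eq_s11 (hf.differentiable (by simp)) p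
  have h2 : pdt f p = _ := h.deriv
  rw [h2]; exact h

lemma pds_fun {E : Type*} [NormedAddCommGroup E] [NormedSpace ℝ E] {f : ℝ × ℝ → E}
    (hf : ContDiff ℝ (⊤ : ℕ∞) f) : pds f = fun p => fderiv ℝ f p (1, 0) :=
  funext fun p => (pds_eq_s11 (hf.differentiable (by simp)) p).deriv

lemma pdt_fun {E : Type*} [NormedAddCommGroup E] [NormedSpace ℝ E] {f : ℝ × ℝ → E}
    (hf : ContDiff ℝ (⊤ : ℕ∞) f) : pdt f = fun p => fderiv ℝ f p (0, 1) :=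
  funext fun p => (pdt_eq_s11 (hf.differentiable (by simp)) p).deriv

lemma contDiff_dir {E : Type*} [NormedAddCommGroup E] [NormedSpace ℝ E] {f : ℝ × ℝ → E}
    (hf : ContDiff ℝ (⊤ : ℕ∞) f) (v : ℝ × ℝ) :
    ContDiff ℝ (⊤ : ℕ∞) (fun p => fderiv ℝ f p v) :=
  (hf.fderiv_right (m := (⊤ : ℕ∞)) (by simp)).clm_apply contDiff_const

lemma mixed {E : Type*} [NormedAddCommGroup E] [NormedSpace ℝ E] {f : ℝ × ℝ → E}
    (hf : ContDiff ℝ (⊤ : ℕ∞) f) (p : ℝ × ℝ) : pdt (pds f) p = pds (pdt f) p := by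
  rw [pds_fun hf, pdt_fun hf, pdt_fun (contDiff_dir hf _), pds_fun (contDiff_dir hf _)]
  have hd : DifferentiableAt ℝ (fderiv ℝ f) p :=
    ((hf.fderiv_right (m := (⊤ : ℕ∞)) (by simp)).differentiable (by simp)) p
  have key : ∀ v w : ℝ × ℝ, fderiv ℝ (fun q => fderiv ℝ f q v) p w
      = fderiv ℝ (fderiv ℝ f) p w v := by
    intro v w
    rw [fderiv_clm_apply hd (differentiableAt_const v)]
    simp
  simp only [key]
  have hs : IsSymmSndFDerivAt ℝ f p :=
    hf.contDiffAt.isSymmSndFDerivAt (by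
      simp only [minSmoothness_of_isRCLikeNormedField]
      exact WithTop.coe_le_coe.2 (le_top : (2 : ℕ∞) ≤ ⊤))
  exact hs _ _

/-- For a parallel frame `(T,E₁,E₂)` of signature `(+,−,+)` with
`Tₛ = k₁E₁ + k₂E₂`, `(E₁)ₛ = k₁T`, `(E₂)ₛ = −k₂T`, and time evolution
`T_t = (k₂)ₛE₁ + (k₁)ₛE₂`, `(E₁)_t = (k₂)ₛT + uE₂`, `(E₂)_t = −(k₁)ₛT + uE₁`,
one has `uₛ = k₁(k₁)ₛ − k₂(k₂)ₛ`, hence `u(s,t) = ½(k₁² − k₂²)(s,t) + c(t)`. -/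
theorem statement11 (T E₁ E₂ : ℝ × ℝ → V3) (k₁ k₂ u : ℝ × ℝ → ℝ)
    (hT : ContDiff ℝ (⊤ : ℕ∞) T) (hE₁ : ContDiff ℝ (⊤ : ℕ∞) E₁) (hE₂ : ContDiff ℝ (⊤ : ℕ∞) E₂)
    (hk₁ : ContDiff ℝ (⊤ : ℕ∞) k₁) (hk₂ : ContDiff ℝ (⊤ : ℕ∞) k₂) (hu : ContDiff ℝ (⊤ : ℕ∞) u)
    (hTT : ∀ p, lor (T p) (T p) = 1)
    (hE₁E₁ : ∀ p, lor (E₁ p) (E₁ p) = -1)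
    (hE₂E₂ : ∀ p, lor (E₂ p) (E₂ p) = 1)
    (hTE₁ : ∀ p, lor (T p) (E₁ p) = 0)
    (hTE₂ : ∀ p, lor (T p) (E₂ p) = 0)
    (hE₁E₂ : ∀ p, lor (E₁ p) (E₂ p) = 0)
    (hTs : ∀ p, pds T p = k₁ p • E₁ p + k₂ p • E₂ p)
    (hE₁s : ∀ p, pds E₁ p = k₁ p • T p)
    (hE₂s : ∀ p, pds E₂ p = -(k₂ p) • T p)
    (hTt : ∀ p, pdt T p = (pds k₂ p) • E₁ p + (pds k₁ p) • E₂ p)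
    (hE₁t : ∀ p, pdt E₁ p = (pds k₂ p) • T p + u p • E₂ p)
    (hE₂t : ∀ p, pdt E₂ p = -(pds k₁ p) • T p + u p • E₁ p) :
    (∀ p, pds u p = k₁ p * pds k₁ p - k₂ p * pds k₂ p) ∧
    (∀ t : ℝ, ∃ c : ℝ, ∀ s : ℝ,
      u (s, t) = (k₁ (s, t) ^ 2 - k₂ (s, t) ^ 2) / 2 + c) := by
  have main : ∀ p, pds u p = k₁ p * pds k₁ p - k₂ p * pds k₂ p := by
    intro p
    have hm := mixed hE₁ p
    rw [show pds E₁ = fun p => k₁ p • T p from funext hE₁s,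
      show pdt E₁ = fun p => pds k₂ p • T p + u p • E₂ p from funext hE₁t] at hm
    have hk₂s : ContDiff ℝ (⊤ : ℕ∞) (pds k₂) := by
      rw [pds_fun hk₂]; exact contDiff_dir hk₂ _
    have h1 : pdt (fun p => k₁ p • T p) p = _ :=
      ((hasDerivAt_pdt hk₁ p).smul (hasDerivAt_pdt hT p)).deriv
    have h2 : pds (fun p => pds k₂ p • T p + u p • E₂ p) p = _ :=
      (((hasDerivAt_pds hk₂s p).smul (hasDerivAt_pds hT p)).add
        ((hasDerivAt_pds hu p).smul (hasDerivAt_pds hE₂ p))).deriv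
    rw [h1, h2, hTt, hTs, hE₂s] at hm
    have e := fun i => congrFun hm i
    have a := e 0
    have b := e 1
    have c := e 2
    simp only [Pi.add_apply, Pi.smul_apply, smul_eq_mul] at a b c
    have g1 := hE₂E₂ p
    have g2 := hTE₂ p
    have g3 := hE₁E₂ p
    simp only [lor] at g1 g2 g3
    linear_combination (E₂ p 0) * a - (E₂ p 1) * b - (E₂ p 2) * c
      - (pds u p + k₂ p * pds k₂ p - k₁ p * pds k₁ p) * g1
      + (pdt k₁ p - pds (pds k₂) p + u p * k₂ p) * g2
      + (k₁ p * pds k₂ p - pds k₂ p * k₁ p) * g3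
  refine ⟨main, fun t => ⟨u (0, t) - (k₁ (0, t) ^ 2 - k₂ (0, t) ^ 2) / 2, fun s => ?_⟩⟩
  have hd : ∀ x : ℝ, HasDerivAt
      (fun s => u (s, t) - (k₁ (s, t) ^ 2 - k₂ (s, t) ^ 2) / 2) 0 x := by
    intro x
    have h := (hasDerivAt_pds hu (x, t)).sub
      ((((hasDerivAt_pds hk₁ (x, t)).pow 2).sub ((hasDerivAt_pds hk₂ (x, t)).pow 2)).div_const 2)
    refine h.congr_deriv ?_
    rw [main]
    simp
    ring
  have hc := is_const_of_deriv_eq_zero (fun x => (hd x).differentiableAt)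
    (fun x => (hd x).deriv) s 0
  linarith
end
end

section
/- Let k₁, k₂ : ℝ × ℝ → ℝ be smooth functions satisfying (k₁)_t = (k₂)ₛₛ − ½(k₁² − k₂²)k₂ and (k₂)_t = (k₁)ₛₛ − ½(k₁² − k₂²)k₁. Then the pair of functions q = (1/√2)(k₁ + k₂) and r = −(1/√2)(k₁ − k₂) is a solution of the non-linear heat system: q_t = q_ss + q²r and r_t = −r_ss − r²q. -/
noncomputable section

open Real

theorem pds_contDiff {f : ℝ × ℝ → ℝ} (hf : ContDiff ℝ (⊤ : ℕ∞) f) :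
    ContDiff ℝ (⊤ : ℕ∞) (pds f) := by
  have h : pds f = fun p => fderiv ℝ f p (1, 0) := by
    funext p
    have h1 : HasFDerivAt f (fderiv ℝ f p) (p.1, p.2) :=
      (hf.differentiable (by simp) p).hasFDerivAt
    have h2 : HasDerivAt (fun s : ℝ => (s, p.2)) ((1 : ℝ), (0 : ℝ)) p.1 :=
      (hasDerivAt_id p.1).prodMk (hasDerivAt_const p.1 p.2)
    exact (h1.comp_hasDerivAt p.1 h2).deriv
  rw [h]
  exact (hf.fderiv_right (m := (⊤ : ℕ∞)) (by simp)).clm_apply contDiff_const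

theorem pds_lin {f g : ℝ × ℝ → ℝ} (hf : ContDiff ℝ (⊤ : ℕ∞) f)
    (hg : ContDiff ℝ (⊤ : ℕ∞) g) (a b : ℝ) :
    pds (fun p => a * f p + b * g p) = fun p => a * pds f p + b * pds g p := by
  funext p
  have h1 : DifferentiableAt ℝ (fun s => f (s, p.2)) p.1 :=
    (hf.differentiable (by simp)).comp (by fun_prop : Differentiable ℝ fun s : ℝ => (s, p.2)) p.1
  have h2 : DifferentiableAt ℝ (fun s => g (s, p.2)) p.1 :=
    (hg.differentiable (by simp)).comp (by fun_prop : Differentiable ℝ fun s : ℝ => (s, p.2)) p.1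
  exact ((h1.hasDerivAt.const_mul a).add (h2.hasDerivAt.const_mul b)).deriv

theorem pdt_lin {f g : ℝ × ℝ → ℝ} (hf : ContDiff ℝ (⊤ : ℕ∞) f)
    (hg : ContDiff ℝ (⊤ : ℕ∞) g) (a b : ℝ) :
    pdt (fun p => a * f p + b * g p) = fun p => a * pdt f p + b * pdt g p := by
  funext p
  have h1 : DifferentiableAt ℝ (fun t => f (p.1, t)) p.2 :=
    (hf.differentiable (by simp)).comp (by fun_prop : Differentiable ℝ fun t : ℝ => (p.1, t)) p.2
  have h2 : DifferentiableAt ℝ (fun t => g (p.1, t)) p.2 :=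
    (hg.differentiable (by simp)).comp (by fun_prop : Differentiable ℝ fun t : ℝ => (p.1, t)) p.2
  exact ((h1.hasDerivAt.const_mul a).add (h2.hasDerivAt.const_mul b)).deriv

/-- If smooth `k₁, k₂ : ℝ × ℝ → ℝ` satisfy
`(k₁)_t = (k₂)ₛₛ − ½(k₁² − k₂²)k₂` and `(k₂)_t = (k₁)ₛₛ − ½(k₁² − k₂²)k₁`, then
`q = (1/√2)(k₁ + k₂)` and `r = −(1/√2)(k₁ − k₂)` solve the nonlinear heat system
`q_t = q_ss + q²r`, `r_t = −r_ss − r²q`. -/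
theorem statement14 (k₁ k₂ : ℝ × ℝ → ℝ)
    (hk₁ : ContDiff ℝ (⊤ : ℕ∞) k₁) (hk₂ : ContDiff ℝ (⊤ : ℕ∞) k₂)
    (e₁ : ∀ p, pdt k₁ p = pds (pds k₂) p - (k₁ p ^ 2 - k₂ p ^ 2) / 2 * k₂ p)
    (e₂ : ∀ p, pdt k₂ p = pds (pds k₁) p - (k₁ p ^ 2 - k₂ p ^ 2) / 2 * k₁ p)
    (q r : ℝ × ℝ → ℝ)
    (hq : ∀ p, q p = (1 / Real.sqrt 2) * (k₁ p + k₂ p))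
    (hr : ∀ p, r p = -(1 / Real.sqrt 2) * (k₁ p - k₂ p)) :
    (∀ p, pdt q p = pds (pds q) p + q p ^ 2 * r p) ∧
    (∀ p, pdt r p = -(pds (pds r) p) - r p ^ 2 * q p) := by
  obtain ⟨c, hc⟩ : ∃ c : ℝ, c = 1 / Real.sqrt 2 := ⟨_, rfl⟩
  have hc2 : c ^ 2 = 1 / 2 := by
    rw [hc, div_pow, Real.sq_sqrt (by norm_num)]; norm_num
  rw [← hc] at hq hr
  have hq' : q = fun p => c * k₁ p + c * k₂ p := by
    funext p; rw [hq]; ring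
  have hr' : r = fun p => (-c) * k₁ p + c * k₂ p := by
    funext p; rw [hr]; ring
  have d₁ := pds_contDiff hk₁
  have d₂ := pds_contDiff hk₂
  subst hq' hr'
  constructor
  · intro p
    rw [pdt_lin hk₁ hk₂, pds_lin hk₁ hk₂, pds_lin d₁ d₂]
    simp only [e₁, e₂]
    linear_combination (k₁ p + k₂ p) ^ 2 * (k₁ p - k₂ p) * c * hc2
  · intro p
    rw [pdt_lin hk₁ hk₂, pds_lin hk₁ hk₂, pds_lin d₁ d₂]
    simp only [e₁, e₂]
    linear_combination (k₁ p - k₂ p) ^ 2 * (k₁ p + k₂ p) * c * hc2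
end
end
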